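/- For every integer m ≥ 3, the function t ↦ √(1+t^m) − t^{m/2} is integrable on (0, ∞), its integral K_m = ∫_0^∞ (√(1+t^m) − t^{m/2}) dt is positive, and K_m = √π · Γ(1 + 1/m) / ( 2 cos(π/m) · Γ(3/2 + 1/m) ). -/

import Mathlib

open Complex Real Filter Set MeasureTheory Asymptotics

/-! For `0 < u` one has `u < √(1 + y²) - y` exactly when `y < (1 - u²) / (2 u)`, so the function
`t ↦ √(1 + t ^ s) - t ^ (s / 2)` on `(0, ∞)` has the inverse `u ↦ ((1 - u²) / (2 u)) ^ (2 / s)` on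
`(0, 1)`. A nonnegative function and its decreasing inverse bound the same planar region, so they
have the same integral; the substitution `x = u²` turns the integral of the inverse into the
beta integral `B(1/2 - 1/s, 2/s + 1)` up to a power of `2`, which the reflection and duplication
formulas reduce to the closed form. -/

lemma Gamma_half_add_mul_Gamma_half_sub (b : ℝ) :
    Real.Gamma (1 / 2 + b) * Real.Gamma (1 / 2 - b) = π / Real.cos (π * b) := by
  have hcos : Real.sin (π * (1 / 2 + b)) = Real.cos (π * b) := by
    rw [← Real.sin_add_pi_div_two]
    ring_nf
  rw [← hcos, ← Real.Gamma_mul_Gamma_one_sub]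
  ring_nf

section Gamma

variable {b : ℝ}

lemma Gamma_half_sub_mul_Gamma_two_mul_add_one (hb : -(1 / 2) < b) :
    Real.Gamma (1 / 2 - b) * Real.Gamma (2 * b + 1) =
      2 ^ (2 * b) * √π * Real.Gamma (1 + b) / Real.cos (π * b) := by
  have duplication : Real.Gamma (1 / 2 + b) * Real.Gamma (1 + b) =
      Real.Gamma (2 * b + 1) * 2 ^ (-(2 * b)) * √π := by
    convert Real.Gamma_mul_Gamma_add_half (1 / 2 + b) using 3 <;> ring_nf
  have Gamma_ne : Real.Gamma (1 / 2 + b) ≠ 0 := (Real.Gamma_pos_of_pos (by linarith)).ne'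
  have two_rpow : (2 : ℝ) ^ (2 * b) * 2 ^ (-(2 * b)) = 1 := by
    rw [← Real.rpow_add two_pos, add_neg_cancel, Real.rpow_zero]
  apply mul_left_cancel₀ Gamma_ne
  calc Real.Gamma (1 / 2 + b) * (Real.Gamma (1 / 2 - b) * Real.Gamma (2 * b + 1))
      = √π * √π / Real.cos (π * b) * Real.Gamma (2 * b + 1) := by
        rw [← mul_assoc, Gamma_half_add_mul_Gamma_half_sub, Real.mul_self_sqrt pi_pos.le]
    _ = 2 ^ (2 * b) * √π * (Real.Gamma (2 * b + 1) * 2 ^ (-(2 * b)) * √π) / Real.cos (π * b) := by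
        linear_combination
          -(√π * √π / Real.cos (π * b) * Real.Gamma (2 * b + 1)) * two_rpow
    _ = Real.Gamma (1 / 2 + b) *
          (2 ^ (2 * b) * √π * Real.Gamma (1 + b) / Real.cos (π * b)) := by
        rw [← duplication]
        ring

lemma beta_half_sub_two_mul_add_one (hb : -(1 / 2) < b) :
    ProbabilityTheory.beta (1 / 2 - b) (2 * b + 1) =
      2 ^ (2 * b) * √π * Real.Gamma (1 + b) / (Real.cos (π * b) * Real.Gamma (3 / 2 + b)) := by
  rw [ProbabilityTheory.beta, Gamma_half_sub_mul_Gamma_two_mul_add_one hb, div_div,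
    show 1 / 2 - b + (2 * b + 1) = 3 / 2 + b by ring]

end Gamma

lemma setLIntegral_Ioo_eq_beta {α β : ℝ} (hα : 0 < α) (hβ : 0 < β) :
    ∫⁻ x in Ioo (0 : ℝ) 1, ENNReal.ofReal (x ^ (α - 1) * (1 - x) ^ (β - 1)) =
      ENNReal.ofReal (ProbabilityTheory.beta α β) := by
  have beta_pos := ProbabilityTheory.beta_pos hα hβ
  have integrand_eq (x : ℝ) : ENNReal.ofReal (x ^ (α - 1) * (1 - x) ^ (β - 1)) =
      ENNReal.ofReal (ProbabilityTheory.beta α β) *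
        ENNReal.ofReal (1 / ProbabilityTheory.beta α β * x ^ (α - 1) * (1 - x) ^ (β - 1)) := by
    rw [← ENNReal.ofReal_mul beta_pos.le]
    field_simp
  simp_rw [integrand_eq]
  rw [lintegral_const_mul _ (by fun_prop), ← ProbabilityTheory.lintegral_betaPDF,
    ProbabilityTheory.lintegral_betaPDF_eq_one hα hβ, mul_one]

lemma setLIntegral_Ioo_comp_of_strictMonoOn {a b : ℝ} {f f' : ℝ → ℝ} (hab : a ≤ b)
    (hf : ContinuousOn f (Icc a b)) (hmono : StrictMonoOn f (Icc a b))
    (hf' : ∀ x ∈ Ioo a b, HasDerivAt f (f' x) x) (g : ℝ → ENNReal) :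
    ∫⁻ y in Ioo (f a) (f b), g y = ∫⁻ x in Ioo a b, ENNReal.ofReal (f' x) * g (f x) := by
  rw [← hf.image_Ioo_of_strictMonoOn hab hmono]
  exact lintegral_image_eq_lintegral_deriv_mul_of_monotoneOn measurableSet_Ioo
    (fun x hx ↦ (hf' x hx).hasDerivWithinAt) (hmono.monotoneOn.mono Ioo_subset_Icc_self) g

lemma setLIntegral_Ioo_one_sub_sq_div_rpow {a : ℝ} (ha₁ : -1 < a) (ha₂ : a < 1) :
    ∫⁻ u in Ioo (0 : ℝ) 1, ENNReal.ofReal (((1 - u ^ 2) / (2 * u)) ^ a) =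
      ENNReal.ofReal (2 ^ (-a - 1) * ProbabilityTheory.beta ((1 - a) / 2) (a + 1)) := by
  have substitution := setLIntegral_Ioo_comp_of_strictMonoOn (f := fun u : ℝ ↦ u ^ 2) zero_le_one
    (by fun_prop) ((pow_left_strictMonoOn₀ two_ne_zero).mono fun _ hu ↦ hu.1)
    (fun u _ ↦ hasDerivAt_pow 2 u)
    (fun x ↦ ENNReal.ofReal (x ^ ((1 - a) / 2 - 1) * (1 - x) ^ (a + 1 - 1)))
  simp only [one_pow, ne_eq, OfNat.ofNat_ne_zero, not_false_eq_true, zero_pow, Nat.cast_ofNat,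
    Nat.add_one_sub_one, pow_one] at substitution
  rw [ENNReal.ofReal_mul (by positivity), ← setLIntegral_Ioo_eq_beta (by linarith) (by linarith),
    substitution, ← lintegral_const_mul _ (by fun_prop)]
  refine setLIntegral_congr_fun measurableSet_Ioo fun u ⟨hu₀, hu₁⟩ ↦ ?_
  have one_sub_sq_nonneg : 0 ≤ 1 - u ^ 2 := by nlinarith
  have sq_rpow : (u ^ 2) ^ ((1 - a) / 2 - 1) = (u ^ a)⁻¹ * u⁻¹ := by
    rw [← Real.rpow_natCast_mul hu₀.le, ← Real.rpow_neg hu₀.le, ← div_eq_mul_inv,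
      ← Real.rpow_sub_one hu₀.ne']
    push_cast
    ring_nf
  have two_rpow : (2 : ℝ) ^ (-a - 1) = (2 ^ a)⁻¹ / 2 := by
    rw [Real.rpow_sub_one two_ne_zero, Real.rpow_neg zero_le_two]
  rw [← ENNReal.ofReal_mul (by positivity), ← ENNReal.ofReal_mul (by positivity),
    Real.div_rpow one_sub_sq_nonneg (by positivity), Real.mul_rpow zero_le_two hu₀.le, sq_rpow,
    two_rpow, add_sub_cancel_right]
  congr 1
  field_simp

lemma setLIntegral_Ioi_ofReal_eq_of_lt_iff_lt {f g : ℝ → ℝ}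
    (hf : AEMeasurable f (volume.restrict (Ioi 0))) (hf₀ : 0 ≤ᵐ[volume.restrict (Ioi 0)] f)
    (hfg : ∀ t > 0, ∀ u > 0, u < f t ↔ t < g u) :
    ∫⁻ t in Ioi 0, ENNReal.ofReal (f t) = ∫⁻ u in Ioi 0, ENNReal.ofReal (g u) := by
  rw [lintegral_eq_lintegral_meas_lt _ hf₀ hf]
  refine setLIntegral_congr_fun measurableSet_Ioi fun u hu ↦ ?_
  have superlevel_eq : {t | u < f t} ∩ Ioi 0 = Ioo 0 (g u) := by
    ext t
    simpa only [mem_inter_iff, mem_ofPred_eq, mem_Ioi, mem_Ioo, and_comm (a := u < f t)] using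
      and_congr_right fun ht ↦ hfg t ht u hu
  simp only [Measure.restrict_apply' measurableSet_Ioi, superlevel_eq, Real.volume_Ioo, sub_zero]

lemma lt_sqrt_one_add_sq_sub_iff {u : ℝ} (hu : 0 < u) (y : ℝ) :
    u < √(1 + y ^ 2) - y ↔ y < (1 - u ^ 2) / (2 * u) := by
  have sq_sqrt : √(1 + y ^ 2) ^ 2 = 1 + y ^ 2 := Real.sq_sqrt (by positivity)
  have neg_lt_sqrt : -y < √(1 + y ^ 2) := Real.lt_sqrt_of_sq_lt (by linarith [neg_sq y])
  have factorization : 1 - u ^ 2 - y * (2 * u) =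
      (√(1 + y ^ 2) - y - u) * (√(1 + y ^ 2) + y + u) := by
    linear_combination -sq_sqrt
  rw [lt_div_iff₀ (by positivity), ← sub_pos, ← sub_pos (b := y * (2 * u)), factorization,
    mul_pos_iff_of_pos_right (by linarith)]

lemma sq_rpow_half {t : ℝ} (ht : 0 ≤ t) (s : ℝ) : (t ^ (s / 2)) ^ 2 = t ^ s := by
  rw [← Real.rpow_mul_natCast ht, Nat.cast_ofNat, div_mul_cancel₀ s two_ne_zero]

lemma ae_nonneg_sqrt_one_add_rpow_sub (s : ℝ) :
    0 ≤ᵐ[volume.restrict (Ioi 0)] fun t : ℝ ↦ √(1 + t ^ s) - t ^ (s / 2) := by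
  filter_upwards [self_mem_ae_restrict measurableSet_Ioi] with t (ht : 0 < t)
  refine sub_nonneg.2 (Real.le_sqrt_of_sq_le ?_)
  linarith [sq_rpow_half ht.le s]

section SqrtRpow

variable {s : ℝ}

/- The maximum with `0` makes the right-hand side vanish for `1 ≤ u`, where the power of the
negative base `(1 - u²) / (2 u)` would be a junk value. -/
lemma lt_sqrt_one_add_rpow_sub_iff (hs : 0 < s) {t u : ℝ} (ht : 0 < t) (hu : 0 < u) :
    u < √(1 + t ^ s) - t ^ (s / 2) ↔ t < max ((1 - u ^ 2) / (2 * u)) 0 ^ (2 / s) := by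
  rw [← sq_rpow_half ht.le, lt_sqrt_one_add_sq_sub_iff hu, ← inv_div s 2,
    Real.lt_rpow_inv_iff_of_pos ht.le (le_max_right _ _) (by positivity), lt_max_iff,
    or_iff_left (Real.rpow_nonneg ht.le _).not_gt]

lemma setLIntegral_Ioi_sqrt_one_add_rpow_sub (hs : 0 < s) :
    ∫⁻ t in Ioi (0 : ℝ), ENNReal.ofReal (√(1 + t ^ s) - t ^ (s / 2)) =
      ∫⁻ u in Ioo (0 : ℝ) 1, ENNReal.ofReal (((1 - u ^ 2) / (2 * u)) ^ (2 / s)) := by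
  rw [setLIntegral_Ioi_ofReal_eq_of_lt_iff_lt (Measurable.aemeasurable (by fun_prop))
    (ae_nonneg_sqrt_one_add_rpow_sub s)
    fun t ht u hu ↦ lt_sqrt_one_add_rpow_sub_iff hs ht hu]
  have vanishes (u : ℝ) (hu : u ∈ Ioi 0 \ Iio 1) :
      ENNReal.ofReal (max ((1 - u ^ 2) / (2 * u)) 0 ^ (2 / s)) = 0 := by
    have one_le : 1 ≤ u := not_lt.1 hu.2
    have base_nonpos : (1 - u ^ 2) / (2 * u) ≤ 0 :=
      div_nonpos_of_nonpos_of_nonneg (by nlinarith) (by linarith)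
    rw [max_eq_right base_nonpos, Real.zero_rpow (by positivity), ENNReal.ofReal_zero]
  rw [← lintegral_inter_add_sdiff _ _ measurableSet_Iio,
    setLIntegral_eq_zero (measurableSet_Ioi.diff measurableSet_Iio) vanishes, add_zero,
    Ioi_inter_Iio]
  refine setLIntegral_congr_fun measurableSet_Ioo fun u ⟨hu₀, hu₁⟩ ↦ ?_
  have base_nonneg : 0 ≤ (1 - u ^ 2) / (2 * u) := div_nonneg (by nlinarith) (by linarith)
  simp only [max_eq_left base_nonneg]

lemma setLIntegral_Ioi_sqrt_one_add_rpow_sub_eq_Gamma (hs : 2 < s) :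
    ∫⁻ t in Ioi (0 : ℝ), ENNReal.ofReal (√(1 + t ^ s) - t ^ (s / 2)) =
      ENNReal.ofReal (√π * Real.Gamma (1 + 1 / s) /
        (2 * Real.cos (π / s) * Real.Gamma (3 / 2 + 1 / s))) := by
  have one_div_s_pos : 0 < 1 / s := by positivity
  have one_div_s_lt : 1 / s < 1 / 2 := one_div_lt_one_div_of_lt two_pos hs
  rw [setLIntegral_Ioi_sqrt_one_add_rpow_sub (by linarith), show 2 / s = 2 * (1 / s) by ring,
    setLIntegral_Ioo_one_sub_sq_div_rpow (by linarith) (by linarith),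
    show (1 - 2 * (1 / s)) / 2 = 1 / 2 - 1 / s by ring,
    beta_half_sub_two_mul_add_one (by linarith), Real.rpow_sub_one two_ne_zero,
    Real.rpow_neg zero_le_two, mul_one_div π]
  congr 1
  field_simp

end SqrtRpow

theorem stmt6_general (s : ℝ) (hs : 2 < s) :
    IntegrableOn (fun t : ℝ ↦ √(1 + t ^ s) - t ^ (s / 2)) (Ioi 0) ∧
    0 < ∫ t in Ioi (0 : ℝ), (√(1 + t ^ s) - t ^ (s / 2)) ∧
    ∫ t in Ioi (0 : ℝ), (√(1 + t ^ s) - t ^ (s / 2)) =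
      √π * Real.Gamma (1 + 1 / s) / (2 * Real.cos (π / s) * Real.Gamma (3 / 2 + 1 / s)) := by
  have cos_pos : 0 < Real.cos (π / s) := by
    have : 0 < π / s := by positivity
    refine Real.cos_pos_of_mem_Ioo ⟨by linarith [pi_pos], ?_⟩
    exact div_lt_div_of_pos_left pi_pos two_pos hs
  have value_pos : 0 < √π * Real.Gamma (1 + 1 / s) /
      (2 * Real.cos (π / s) * Real.Gamma (3 / 2 + 1 / s)) := by positivity
  have nonneg := ae_nonneg_sqrt_one_add_rpow_sub s
  have measurable : AEStronglyMeasurable (fun t : ℝ ↦ √(1 + t ^ s) - t ^ (s / 2))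
      (volume.restrict (Ioi 0)) := Measurable.aestronglyMeasurable (by fun_prop)
  have lintegral_eq := setLIntegral_Ioi_sqrt_one_add_rpow_sub_eq_Gamma hs
  have integral_eq := integral_eq_lintegral_of_nonneg_ae nonneg measurable
  rw [lintegral_eq, ENNReal.toReal_ofReal value_pos.le] at integral_eq
  refine ⟨?_, integral_eq ▸ value_pos, integral_eq⟩
  exact (lintegral_ofReal_ne_top_iff_integrable measurable nonneg).1
    (lintegral_eq ▸ ENNReal.ofReal_ne_top)

/-- `K_m = ∫₀^∞ (√(1+t^m) - t^{m/2}) dt` converges, is positive, and equals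
`√π Γ(1+1/m) / (2 cos(π/m) Γ(3/2+1/m))`. -/
theorem stmt6 (m : ℕ) (hm : 3 ≤ m) :
    MeasureTheory.IntegrableOn
      (fun t : ℝ => Real.sqrt (1 + t ^ m) - t ^ ((m : ℝ) / 2)) (Set.Ioi 0) ∧
    0 < ∫ t in Set.Ioi (0 : ℝ), (Real.sqrt (1 + t ^ m) - t ^ ((m : ℝ) / 2)) ∧
    ∫ t in Set.Ioi (0 : ℝ), (Real.sqrt (1 + t ^ m) - t ^ ((m : ℝ) / 2)) =
      Real.sqrt Real.pi * Real.Gamma (1 + 1 / (m : ℝ)) /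
        (2 * Real.cos (Real.pi / (m : ℝ)) * Real.Gamma (3 / 2 + 1 / (m : ℝ))) := by
  simpa only [Real.rpow_natCast] using stmt6_general m (by exact_mod_cast hm)
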